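/- The Gaussian Poincaré inequality: for every smooth compactly supported (or suitably integrable Sobolev) function f on ℝⁿ, Var_{γ_n}(f) = ∫ f² dγ_n − (∫ f dγ_n)² ≤ ∫ |∇f|² dγ_n. -/

import Mathlib

open MeasureTheory Real

/-- The standard Gaussian probability measure `γ_n` on `ℝⁿ`, with density
`(2π)^(−n/2) e^(−|x|²/2)` with respect to Lebesgue measure. -/
noncomputable def gaussianMeasureN (n : ℕ) : Measure (EuclideanSpace ℝ (Fin n)) :=
  volume.withDensity
    (fun x => ENNReal.ofReal ((2 * π) ^ (-(n : ℝ) / 2) * exp (-‖x‖ ^ 2 / 2)))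

/-!
Let `X`, `Y` be independent standard Gaussian vectors and `φ(θ) = 𝔼[f(X) f(cos θ X + sin θ Y)]`, so
that `φ(0) = 𝔼[f²]` and `φ(π/2) = (𝔼 f)²`. Differentiating produces the factor
`-sin θ X + cos θ Y`, which together with `cos θ X + sin θ Y` is again a pair of independent
standard Gaussians; Gaussian integration by parts in it gives
`φ'(θ) = -sin θ 𝔼⟪∇f(X), ∇f(cos θ X + sin θ Y)⟫`. By Cauchy-Schwarz `φ'(θ) ≥ -sin θ 𝔼‖∇f‖²` for
`θ ∈ [0, π/2]`, and `∫ sin = 1` over this interval.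
-/

open ProbabilityTheory Set
open scoped ENNReal Gradient NNReal RealInnerProductSpace

section Density

variable {E : Type*} [NormedAddCommGroup E] [InnerProductSpace ℝ E]

/-- The density `(2π)^(-d/2) e^(-|x|²/2)` of the standard Gaussian measure on a Euclidean space of
dimension `d`, with respect to Lebesgue measure. -/
noncomputable def stdGaussianPDFReal (x : E) : ℝ :=
  (2 * π) ^ (-(Module.finrank ℝ E : ℝ) / 2) * exp (-‖x‖ ^ 2 / 2)

lemma stdGaussianPDFReal_nonneg (x : E) : 0 ≤ stdGaussianPDFReal x := by
  unfold stdGaussianPDFReal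
  positivity

lemma hasFDerivAt_stdGaussianPDFReal (x : E) :
    HasFDerivAt stdGaussianPDFReal (-stdGaussianPDFReal x • innerSL ℝ x) x := by
  have hexponent : HasFDerivAt (fun y : E ↦ -‖y‖ ^ 2 / 2) (-innerSL ℝ x) x := by
    convert! (hasStrictFDerivAt_norm_sq x).hasFDerivAt.mul_const (-2⁻¹ : ℝ) using 1
    · ext y
      ring
    · module
  convert! hexponent.exp.const_mul ((2 * π) ^ (-(Module.finrank ℝ E : ℝ) / 2)) using 1
  simp only [stdGaussianPDFReal, smul_neg, neg_smul, smul_smul]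

lemma continuous_stdGaussianPDFReal : Continuous (stdGaussianPDFReal : E → ℝ) := by
  unfold stdGaussianPDFReal
  fun_prop

variable [FiniteDimensional ℝ E] [MeasurableSpace E] [BorelSpace E]

lemma integrable_stdGaussianPDFReal : Integrable (stdGaussianPDFReal : E → ℝ) := by
  have h := (GaussianFourier.integrable_cexp_neg_mul_sq_norm_add (V := E) (b := 1 / 2)
    (by norm_num) 0 0).norm
  simp only [Complex.norm_exp] at h
  refine (h.congr (.of_forall fun x ↦ ?_)).const_mul _
  have hx : -(1 / 2 : ℂ) * (‖x‖ : ℂ) ^ 2 + 0 * ((⟪(0 : E), x⟫ : ℝ) : ℂ)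
      = ((-‖x‖ ^ 2 / 2 : ℝ) : ℂ) := by
    push_cast
    ring
  simp only [hx, Complex.ofReal_re]

lemma integral_stdGaussianPDFReal_smul_cexp (t : E) :
    ∫ x : E, stdGaussianPDFReal x • Complex.exp (⟪x, t⟫ * Complex.I)
      = Complex.exp (-‖t‖ ^ 2 / 2) := by
  have hintegrand (x : E) : stdGaussianPDFReal x • Complex.exp (⟪x, t⟫ * Complex.I)
      = ((2 * π) ^ (-(Module.finrank ℝ E : ℝ) / 2) : ℝ) *
        Complex.exp (-(1 / 2) * ‖x‖ ^ 2 + Complex.I * ⟪t, x⟫) := by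
    rw [stdGaussianPDFReal, Complex.real_smul, Complex.exp_add, real_inner_comm]
    push_cast
    ring_nf
  have hconst : (π / (1 / 2) : ℂ) ^ (Module.finrank ℝ E / 2 : ℂ) =
      ((2 * π) ^ ((Module.finrank ℝ E : ℝ) / 2) : ℝ) := by
    rw [Complex.ofReal_cpow (by positivity)]
    push_cast
    ring_nf
  have hcancel : (2 * π) ^ (-(Module.finrank ℝ E : ℝ) / 2) *
      (2 * π) ^ ((Module.finrank ℝ E : ℝ) / 2) = 1 := by
    rw [← rpow_add (by positivity), neg_div, neg_add_cancel, rpow_zero]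
  simp_rw [hintegrand]
  rw [integral_const_mul,
    GaussianFourier.integral_cexp_neg_mul_sq_norm_add (by norm_num) Complex.I t, hconst,
    ← mul_assoc, ← Complex.ofReal_mul, hcancel, Complex.I_sq]
  push_cast
  ring_nf

lemma stdGaussian_eq_withDensity :
    stdGaussian E = volume.withDensity (fun x ↦ ENNReal.ofReal (stdGaussianPDFReal x)) := by
  have := isFiniteMeasure_withDensity_ofReal (integrable_stdGaussianPDFReal (E := E)).2
  refine Measure.ext_of_charFun ?_
  ext t
  rw [charFun_stdGaussian, charFun_apply, integral_withDensity_eq_integral_toReal_smul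
    continuous_stdGaussianPDFReal.measurable.ennreal_ofReal (by simp)]
  simp only [ENNReal.toReal_ofReal (stdGaussianPDFReal_nonneg _)]
  exact (integral_stdGaussianPDFReal_smul_cexp t).symm

lemma integral_stdGaussian_eq_integral_smul {F : Type*} [NormedAddCommGroup F] [NormedSpace ℝ F]
    (g : E → F) : ∫ x, g x ∂stdGaussian E = ∫ x, stdGaussianPDFReal x • g x := by
  rw [stdGaussian_eq_withDensity, integral_withDensity_eq_integral_toReal_smul
    continuous_stdGaussianPDFReal.measurable.ennreal_ofReal (by simp)]
  simp only [ENNReal.toReal_ofReal (stdGaussianPDFReal_nonneg _)]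

lemma integrable_stdGaussian_iff {F : Type*} [NormedAddCommGroup F] [NormedSpace ℝ F] {g : E → F} :
    Integrable g (stdGaussian E) ↔ Integrable fun x ↦ stdGaussianPDFReal x • g x := by
  rw [stdGaussian_eq_withDensity, integrable_withDensity_iff_integrable_smul'
    continuous_stdGaussianPDFReal.measurable.ennreal_ofReal (by simp)]
  simp only [ENNReal.toReal_ofReal (stdGaussianPDFReal_nonneg _)]

theorem integral_mul_inner_stdGaussian {g : E → ℝ} {w : E} (hg : Differentiable ℝ g)
    (hg_int : Integrable g (stdGaussian E))
    (hg_inner : Integrable (fun x ↦ g x * ⟪x, w⟫) (stdGaussian E))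
    (hg_fderiv : Integrable (fun x ↦ fderiv ℝ g x w) (stdGaussian E)) :
    ∫ x, g x * ⟪x, w⟫ ∂stdGaussian E = ∫ x, fderiv ℝ g x w ∂stdGaussian E := by
  have hfderiv (x : E) :
      fderiv ℝ stdGaussianPDFReal x w = -(stdGaussianPDFReal x * ⟪x, w⟫) := by
    simp [(hasFDerivAt_stdGaussianPDFReal x).fderiv]
  simp only [integrable_stdGaussian_iff, smul_eq_mul] at hg_int hg_inner hg_fderiv
  have hparts := integral_mul_fderiv_eq_neg_fderiv_mul_of_integrable
    (f := g) (g := stdGaussianPDFReal) (v := w) (μ := volume)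
    (by simpa only [mul_comm] using hg_fderiv)
    (by simpa only [hfderiv, mul_neg, mul_left_comm] using hg_inner.fun_neg)
    (by simpa only [mul_comm] using hg_int)
    (fun x _ ↦ hg x) (fun x _ ↦ (hasFDerivAt_stdGaussianPDFReal x).differentiableAt)
  simp only [hfderiv, mul_neg, integral_neg, neg_inj] at hparts
  simp only [integral_stdGaussian_eq_integral_smul, smul_eq_mul]
  simpa only [mul_left_comm, mul_comm] using hparts

end Density

local notation "ρ" => ContinuousLinearMap.rotation

section Rotation

variable {E : Type*} [NormedAddCommGroup E] [NormedSpace ℝ E]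

lemma rotation_rotation_neg (θ : ℝ) (z : E × E) : ρ θ (ρ (-θ) z) = z := by
  have h (x : E) : (cos θ ^ 2 + sin θ ^ 2) • x = x := by rw [cos_sq_add_sin_sq, one_smul]
  ext
  all_goals simp only [ContinuousLinearMap.rotation_apply, cos_neg, sin_neg]
  · exact .trans (by module) (h z.1)
  · exact .trans (by module) (h z.2)

lemma rotation_neg_rotation (θ : ℝ) (z : E × E) : ρ (-θ) (ρ θ z) = z := by
  simpa using rotation_rotation_neg (-θ) z

lemma norm_rotation_snd_le (θ : ℝ) (z : E × E) : ‖(ρ θ z).2‖ ≤ ‖z.1‖ + ‖z.2‖ := by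
  rw [ContinuousLinearMap.rotation_apply]
  refine (norm_add_le _ _).trans ?_
  simp only [norm_smul, norm_neg, norm_eq_abs]
  gcongr
  · exact mul_le_of_le_one_left (norm_nonneg _) (abs_sin_le_one θ)
  · exact mul_le_of_le_one_left (norm_nonneg _) (abs_cos_le_one θ)

lemma hasDerivAt_rotation_fst (θ : ℝ) (z : E × E) :
    HasDerivAt (fun t ↦ (ρ t z).1) (ρ θ z).2 θ :=
  ((hasDerivAt_cos θ).smul_const z.1).add ((hasDerivAt_sin θ).smul_const z.2)

variable [CompleteSpace E] [SecondCountableTopology E] [MeasurableSpace E] [BorelSpace E]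
  {μ : Measure E} [IsGaussian μ]

lemma measurePreserving_rotation (hμ : μ[id] = 0) (θ : ℝ) :
    MeasurePreserving (ρ θ) (μ.prod μ) (μ.prod μ) :=
  ⟨by fun_prop, IsGaussian.map_rotation_eq_self hμ θ⟩

lemma integral_comp_rotation {F : Type*} [NormedAddCommGroup F] [NormedSpace ℝ F]
    (hμ : μ[id] = 0) (θ : ℝ) (G : E × E → F) :
    ∫ z, G (ρ θ z) ∂(μ.prod μ) = ∫ z, G z ∂(μ.prod μ) :=
  let e := ContinuousLinearEquiv.equivOfInverse (ρ θ) (ρ (-θ))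
    (rotation_neg_rotation θ) (rotation_rotation_neg θ)
  (measurePreserving_rotation hμ θ).integral_comp e.toHomeomorph.measurableEmbedding G

end Rotation

section RotationCorrelation

variable {E H : Type*} [NormedAddCommGroup E] [NormedSpace ℝ E] [MeasurableSpace E]
  [NormedAddCommGroup H] [InnerProductSpace ℝ H] {μ : Measure E}

/-- The correlation `𝔼⟪F X, F (cos θ X + sin θ Y)⟫`, where `X` and `Y` are independent with law `μ`.
For standard Gaussian `μ` and `cos θ = e^(-t)` this is `∫ ⟪F, P_t F⟫ dμ`, with `P_t` the
Ornstein-Uhlenbeck semigroup; the parameter `θ` makes `(X, Y)` undergo a rotation. -/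
noncomputable def rotationCorr (μ : Measure E) (F : E → H) (θ : ℝ) : ℝ :=
  ∫ z, ⟪F z.1, F (ρ θ z).1⟫ ∂(μ.prod μ)

lemma rotationCorr_real (f : E → ℝ) (θ : ℝ) :
    rotationCorr μ f θ = ∫ z, f z.1 * f (ρ θ z).1 ∂(μ.prod μ) := by
  simp [rotationCorr, mul_comm]

lemma rotationCorr_zero [IsProbabilityMeasure μ] (F : E → H) :
    rotationCorr μ F 0 = ∫ x, ‖F x‖ ^ 2 ∂μ := by
  simp [rotationCorr, ContinuousLinearMap.rotation_apply, integral_fun_fst (fun x ↦ ‖F x‖ ^ 2)]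

lemma rotationCorr_pi_div_two [SFinite μ] (f : E → ℝ) :
    rotationCorr μ f (π / 2) = (∫ x, f x ∂μ) ^ 2 := by
  simp [rotationCorr_real, ContinuousLinearMap.rotation_apply, integral_prod_mul, pow_two]

variable [CompleteSpace E] [SecondCountableTopology E] [BorelSpace E] [IsGaussian μ]

lemma rotationCorr_neg (hμ : μ[id] = 0) (F : E → H) (θ : ℝ) :
    rotationCorr μ F (-θ) = rotationCorr μ F θ := by
  rw [rotationCorr, ← integral_comp_rotation hμ θ]
  simp only [rotation_neg_rotation]
  exact integral_congr_ae (.of_forall fun z ↦ real_inner_comm _ _)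

lemma rotationCorr_le (hμ : μ[id] = 0) {F : E → H} (hF : MemLp F 2 μ) (θ : ℝ) :
    rotationCorr μ F θ ≤ ∫ x, ‖F x‖ ^ 2 ∂μ := by
  have hfst : MemLp (fun z : E × E ↦ F z.1) 2 (μ.prod μ) := hF.comp_fst μ
  have hrot : MemLp (fun z ↦ F (ρ θ z).1) 2 (μ.prod μ) :=
    hfst.comp_measurePreserving (measurePreserving_rotation hμ θ)
  have hint_fst := hfst.norm.integrable_sq
  have hint_rot := hrot.norm.integrable_sq
  have hamgm (x y : H) : ⟪x, y⟫ ≤ (‖x‖ ^ 2 + ‖y‖ ^ 2) / 2 := by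
    linarith [norm_sub_sq_real x y, sq_nonneg ‖x - y‖]
  have heq_fst : ∫ z : E × E, ‖F z.1‖ ^ 2 ∂(μ.prod μ) = ∫ x, ‖F x‖ ^ 2 ∂μ := by
    simp [integral_fun_fst fun x ↦ ‖F x‖ ^ 2]
  calc rotationCorr μ F θ
      ≤ ∫ z, (‖F z.1‖ ^ 2 + ‖F (ρ θ z).1‖ ^ 2) / 2 ∂(μ.prod μ) :=
        integral_mono (memLp_one_iff_integrable.1 ((innerSL ℝ).memLp_of_bilin 1 hfst hrot))
          ((hint_fst.add hint_rot).div_const 2) fun z ↦ hamgm _ _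
    _ = ∫ x, ‖F x‖ ^ 2 ∂μ := by
        rw [integral_div, integral_add hint_fst hint_rot,
          integral_comp_rotation hμ θ fun z ↦ ‖F z.1‖ ^ 2, heq_fst, add_self_div_two]

end RotationCorrelation

section Gradient

lemma memLp_comp_of_lipschitzWith {α E F : Type*} [MeasurableSpace α] {μ : Measure α}
    [IsFiniteMeasure μ] [NormedAddCommGroup E] [NormedAddCommGroup F] {f : E → F} {K : ℝ≥0}
    {p : ℝ≥0∞} {X : α → E} (hf : LipschitzWith K f) (hX : MemLp X p μ) :
    MemLp (fun a ↦ f (X a)) p μ := by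
  have hsub : LipschitzWith K fun x ↦ f x - f 0 := by
    simpa using hf.sub (LipschitzWith.const (f 0))
  simpa only [Pi.add_def, Function.comp_apply, sub_add_cancel] using
    (hsub.comp_memLp (by simp) hX).add (memLp_const (f 0))

variable {E : Type*} [NormedAddCommGroup E] [InnerProductSpace ℝ E] [CompleteSpace E]
  {f : E → ℝ} {K : ℝ≥0}

lemma norm_gradient_le_of_lipschitzWith (hf : LipschitzWith K f) (x : E) : ‖∇ f x‖ ≤ K := by
  rw [gradient, LinearIsometryEquiv.norm_map]
  exact norm_fderiv_le_of_lipschitz ℝ hf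

variable [MeasurableSpace E] [BorelSpace E]

lemma measurable_gradient (f : E → ℝ) : Measurable (∇ f) :=
  (InnerProductSpace.toDual ℝ E).symm.continuous.measurable.comp (measurable_fderiv ℝ f)

variable [SecondCountableTopology E]

lemma memLp_gradient_of_lipschitzWith {μ : Measure E} [IsFiniteMeasure μ] (p : ℝ≥0∞)
    (hf : LipschitzWith K f) : MemLp (∇ f) p μ :=
  .of_bound (measurable_gradient f).aestronglyMeasurable K
    (.of_forall (norm_gradient_le_of_lipschitzWith hf))

lemma hasDerivAt_rotationCorr_of_lipschitzWith {μ : Measure E} [IsFiniteMeasure μ]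
    (hμ : MemLp id 2 μ) (hf : Differentiable ℝ f) (hlip : LipschitzWith K f) (θ : ℝ) :
    HasDerivAt (rotationCorr μ f)
      (∫ z, f z.1 * ⟪∇ f (ρ θ z).1, (ρ θ z).2⟫ ∂(μ.prod μ)) θ := by
  have hfst : MemLp (fun z : E × E ↦ z.1) 2 (μ.prod μ) := hμ.comp_fst μ
  have hsnd : MemLp (fun z : E × E ↦ z.2) 2 (μ.prod μ) := hμ.comp_snd μ
  have hrot : MemLp (fun z ↦ (ρ θ z).1) 2 (μ.prod μ) :=
    (hfst.const_smul (cos θ)).add (hsnd.const_smul (sin θ))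
  have hf_fst := memLp_comp_of_lipschitzWith hlip hfst
  have hf_rot := memLp_comp_of_lipschitzWith hlip hrot
  have hfc := hf.continuous
  have hgrad := measurable_gradient f
  have hderiv (z : E × E) (t : ℝ) :
      HasDerivAt (fun t ↦ f z.1 * f (ρ t z).1) (f z.1 * ⟪∇ f (ρ t z).1, (ρ t z).2⟫) t := by
    rw [inner_gradient_left]
    exact ((hf _).hasFDerivAt.comp_hasDerivAt t (hasDerivAt_rotation_fst t z)).const_mul _
  have hbound (z : E × E) (t : ℝ) :
      ‖f z.1 * ⟪∇ f (ρ t z).1, (ρ t z).2⟫‖ ≤ ‖f z.1‖ * (K * (‖z.1‖ + ‖z.2‖)) := by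
    rw [norm_mul]
    gcongr
    refine (norm_inner_le_norm _ _).trans ?_
    gcongr
    · exact norm_gradient_le_of_lipschitzWith hlip _
    · exact norm_rotation_snd_le t z
  simp only [funext (rotationCorr_real f)]
  exact (hasDerivAt_integral_of_dominated_loc_of_deriv_le
    (F := fun t z ↦ f z.1 * f (ρ t z).1) (F' := fun t z ↦ f z.1 * ⟪∇ f (ρ t z).1, (ρ t z).2⟫)
    (bound := fun z ↦ ‖f z.1‖ * (K * (‖z.1‖ + ‖z.2‖))) Filter.univ_mem
    (.of_forall fun t ↦ Continuous.aestronglyMeasurable (by fun_prop))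
    (hf_fst.integrable_mul hf_rot)
    (Measurable.aestronglyMeasurable (by fun_prop))
    (.of_forall fun z t _ ↦ hbound z t)
    (hf_fst.norm.integrable_mul ((hfst.norm.add hsnd.norm).const_mul K))
    (.of_forall fun z t _ ↦ hderiv z t)).2

end Gradient

section Gaussian

variable {E : Type*} [NormedAddCommGroup E] [InnerProductSpace ℝ E] [FiniteDimensional ℝ E]
  [MeasurableSpace E] [BorelSpace E] {f : E → ℝ} {K : ℝ≥0}

lemma integral_comp_add_smul_mul_inner_stdGaussian (hf : Differentiable ℝ f)
    (hlip : LipschitzWith K f) (a w : E) (c : ℝ) :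
    ∫ v, f (a + c • v) * ⟪v, w⟫ ∂stdGaussian E
      = c * ∫ v, ⟪∇ f (a + c • v), w⟫ ∂stdGaussian E := by
  have hid : MemLp (fun v : E ↦ v) 2 (stdGaussian E) := IsGaussian.memLp_two_id
  have hcomp : MemLp (fun v ↦ f (a + c • v)) 2 (stdGaussian E) :=
    memLp_comp_of_lipschitzWith hlip ((memLp_const a).add (hid.const_smul c))
  have hderiv (v : E) : HasFDerivAt (fun v ↦ f (a + c • v)) (c • fderiv ℝ f (a + c • v)) v := by
    simpa [Function.comp_def] using (hf (a + c • v)).hasFDerivAt.comp v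
      (((hasFDerivAt_id v).const_smul c).const_add a)
  have hgrad : MemLp (fun v ↦ ∇ f (a + c • v)) 1 (stdGaussian E) :=
    .of_bound ((measurable_gradient f).comp (by fun_prop)).aestronglyMeasurable K
      (.of_forall fun v ↦ norm_gradient_le_of_lipschitzWith hlip _)
  have hfderiv (v : E) :
      fderiv ℝ (fun v ↦ f (a + c • v)) v w = c * ⟪∇ f (a + c • v), w⟫ := by
    simp [(hderiv v).fderiv, inner_gradient_left]
  rw [integral_mul_inner_stdGaussian (fun v ↦ (hderiv v).differentiableAt)
    (hcomp.integrable one_le_two) (hcomp.integrable_mul (hid.inner_const w))]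
  · simp only [hfderiv, integral_const_mul]
  · simpa only [hfderiv] using
      (memLp_one_iff_integrable.1 (hgrad.inner_const w)).const_mul c

lemma integral_mul_inner_gradient_rotation (hf : Differentiable ℝ f) (hlip : LipschitzWith K f)
    (θ : ℝ) :
    ∫ z, f z.1 * ⟪∇ f (ρ θ z).1, (ρ θ z).2⟫ ∂((stdGaussian E).prod (stdGaussian E))
      = -sin θ * rotationCorr (stdGaussian E) (∇ f) θ := by
  set γ := stdGaussian E
  have hmean : γ[id] = 0 := integral_id_stdGaussian
  have hid : MemLp id 2 γ := IsGaussian.memLp_two_id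
  have hrot := measurePreserving_rotation hmean (-θ)
  have hf_rot : MemLp (fun z ↦ f (ρ (-θ) z).1) 2 (γ.prod γ) :=
    memLp_comp_of_lipschitzWith hlip ((hid.comp_fst γ).comp_measurePreserving hrot)
  have hgrad_fst (p : ℝ≥0∞) : MemLp (fun z : E × E ↦ ∇ f z.1) p (γ.prod γ) :=
    (memLp_gradient_of_lipschitzWith p hlip).comp_fst γ
  have hgrad_rot : MemLp (fun z ↦ ∇ f (ρ (-θ) z).1) 2 (γ.prod γ) :=
    (hgrad_fst 2).comp_measurePreserving hrot
  have hgrad_inner : MemLp (fun z : E × E ↦ ⟪∇ f z.1, z.2⟫) 2 (γ.prod γ) :=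
    (innerSL ℝ).memLp_of_bilin 2 (hgrad_fst ∞) (hid.comp_snd γ)
  have hstein (u : E) : ∫ v, f (ρ (-θ) (u, v)).1 * ⟪∇ f u, v⟫ ∂γ
      = -sin θ * ∫ v, ⟪∇ f u, ∇ f (ρ (-θ) (u, v)).1⟫ ∂γ := by
    simpa only [ContinuousLinearMap.rotation_apply, sin_neg, real_inner_comm] using
      integral_comp_add_smul_mul_inner_stdGaussian hf hlip (cos (-θ) • u) (∇ f u) (sin (-θ))
  calc ∫ z, f z.1 * ⟪∇ f (ρ θ z).1, (ρ θ z).2⟫ ∂(γ.prod γ)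
      = ∫ z, f (ρ (-θ) z).1 * ⟪∇ f z.1, z.2⟫ ∂(γ.prod γ) := by
        simpa only [rotation_neg_rotation] using
          integral_comp_rotation hmean θ fun z ↦ f (ρ (-θ) z).1 * ⟪∇ f z.1, z.2⟫
    _ = ∫ u, ∫ v, f (ρ (-θ) (u, v)).1 * ⟪∇ f u, v⟫ ∂γ ∂γ :=
        integral_prod _ (hf_rot.integrable_mul hgrad_inner)
    _ = -sin θ * rotationCorr γ (∇ f) (-θ) := by
        simp only [hstein, integral_const_mul]
        rw [rotationCorr, integral_prod]
        exact memLp_one_iff_integrable.1 ((innerSL ℝ).memLp_of_bilin 1 (hgrad_fst 2) hgrad_rot)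
    _ = -sin θ * rotationCorr γ (∇ f) θ := by rw [rotationCorr_neg hmean]

lemma hasDerivAt_rotationCorr_stdGaussian (hf : Differentiable ℝ f) (hlip : LipschitzWith K f)
    (θ : ℝ) :
    HasDerivAt (rotationCorr (stdGaussian E) f)
      (-sin θ * rotationCorr (stdGaussian E) (∇ f) θ) θ :=
  integral_mul_inner_gradient_rotation hf hlip θ ▸
    hasDerivAt_rotationCorr_of_lipschitzWith IsGaussian.memLp_two_id hf hlip θ

theorem gaussian_poincare_general (hf : Differentiable ℝ f) (hlip : LipschitzWith K f) :
    ∫ x, f x ^ 2 ∂stdGaussian E - (∫ x, f x ∂stdGaussian E) ^ 2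
      ≤ ∫ x, ‖∇ f x‖ ^ 2 ∂stdGaussian E := by
  set D := ∫ x, ‖∇ f x‖ ^ 2 ∂stdGaussian E
  have hderiv (θ : ℝ) : HasDerivAt (fun t ↦ rotationCorr (stdGaussian E) f t - cos t * D)
      (-sin θ * rotationCorr (stdGaussian E) (∇ f) θ - -sin θ * D) θ :=
    (hasDerivAt_rotationCorr_stdGaussian hf hlip θ).sub ((hasDerivAt_cos θ).mul_const D)
  have hcorr (θ : ℝ) : rotationCorr (stdGaussian E) (∇ f) θ ≤ D :=
    rotationCorr_le integral_id_stdGaussian (memLp_gradient_of_lipschitzWith 2 hlip) θ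
  have hmono : MonotoneOn (fun t ↦ rotationCorr (stdGaussian E) f t - cos t * D)
      (Icc 0 (π / 2)) := by
    refine monotoneOn_of_hasDerivWithinAt_nonneg (convex_Icc _ _)
      (fun θ _ ↦ (hderiv θ).continuousAt.continuousWithinAt)
      (fun θ _ ↦ (hderiv θ).hasDerivWithinAt) fun θ hθ ↦ ?_
    rw [interior_Icc] at hθ
    have hsin : 0 ≤ sin θ := sin_nonneg_of_nonneg_of_le_pi hθ.1.le (by linarith [hθ.2, pi_pos])
    linarith [mul_le_mul_of_nonneg_left (hcorr θ) hsin]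
  have hends := hmono (left_mem_Icc.2 pi_div_two_pos.le) (right_mem_Icc.2 pi_div_two_pos.le)
    pi_div_two_pos.le
  simp only [rotationCorr_zero, rotationCorr_pi_div_two, cos_zero, cos_pi_div_two, norm_eq_abs,
    sq_abs] at hends
  linarith

end Gaussian

lemma gaussianMeasureN_eq_stdGaussian (n : ℕ) :
    gaussianMeasureN n = stdGaussian (EuclideanSpace ℝ (Fin n)) := by
  simp only [stdGaussian_eq_withDensity, gaussianMeasureN, stdGaussianPDFReal,
    finrank_euclideanSpace_fin]

/-- The Gaussian Poincaré inequality: for every smooth compactly supported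
`f : ℝⁿ → ℝ`, `Var_{γ_n}(f) = ∫ f² dγ_n − (∫ f dγ_n)² ≤ ∫ |∇f|² dγ_n`. -/
theorem gaussian_poincare (n : ℕ) (f : EuclideanSpace ℝ (Fin n) → ℝ)
    (hf : ContDiff ℝ (⊤ : ℕ∞) f) (hsupp : HasCompactSupport f) :
    (∫ x, (f x) ^ 2 ∂(gaussianMeasureN n)) - (∫ x, f x ∂(gaussianMeasureN n)) ^ 2
      ≤ ∫ x, ‖gradient f x‖ ^ 2 ∂(gaussianMeasureN n) := by
  obtain ⟨K, hlip⟩ := ContDiff.lipschitzWith_of_hasCompactSupport hsupp hf (by simp)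
  simpa only [gaussianMeasureN_eq_stdGaussian] using
    gaussian_poincare_general (hf.differentiable (by simp)) hlip
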